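/- Every two-connected cyclically orientable finite simple graph with at least 3 vertices has a vertex of degree 2. -/

import Mathlib

/-!
Cyclic orientability enters only locally. If a connected set avoiding `b` contains exactly two
neighbors `a`, `c` of `b` (a bypass of `b` from `a` to `c`), then a shortest path from `a` to `c`
in it closes up through `b` to a chordless cycle, so exactly one of `ba`, `bc` points away from `b`.
Hence no vertex has three neighbors that are pairwise joined by bypasses.

Consequently, a finite connected set `K` disjoint from a hole `C`, the vertex set of a chordless
cycle, is attached to `C` only at the ends of one edge. Otherwise, shrink `K` to a minimal connected
set `L` with the same attachments; some attachment `b` has a single neighbor `q` in `L`. Let `c`,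
`d` be the neighbors of `b` on `C`. There is an attachment outside `{b, d}` and one outside
`{b, c}`, so `c`, `d` and `q` are pairwise joined by bypasses of `b`, a contradiction.

Now let `ab` be an edge and `D` a finite component of `G - {a, b}`. By two-connectedness both `a`
and `b` have neighbors in `D`, so some hole `C` contains `a`, `b` and a vertex of `D`. If `C` covers
`D`, each vertex of `C` in `D` has degree two. If not, a component of `G - C` inside `D` is attached
to one edge of `C`, and induction on the size of `D` applies.
-/

open SimpleGraph

variable {V : Type*}

/-- An orientation of a simple graph `G`: a directed relation choosing, for each
edge of `G`, exactly one of its two possible directions. -/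
structure SimpleGraph.Orientation (G : SimpleGraph V) : Type _ where
  dir : V → V → Prop
  dir_adj : ∀ u v, dir u v → G.Adj u v
  adj_iff_dir : ∀ u v, G.Adj u v → (dir u v ↔ ¬ dir v u)

/-- A closed walk is a chordless cycle if it is a cycle and the only edges of `G`
between vertices of the cycle are the edges of the cycle itself (i.e. it is an
induced cycle). -/
def SimpleGraph.Walk.IsChordlessCycle {G : SimpleGraph V} {v : V} (c : G.Walk v v) : Prop :=
  c.IsCycle ∧ ∀ u w : V, u ∈ c.support → w ∈ c.support → G.Adj u w → s(u, w) ∈ c.edges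

/-- A cycle (closed walk) is cyclically oriented by an orientation `o` if all of
its darts point the same way around the cycle. -/
def SimpleGraph.Orientation.IsCyclicOn {G : SimpleGraph V} (o : G.Orientation) {v : V}
    (c : G.Walk v v) : Prop :=
  (∀ d ∈ c.darts, o.dir d.toProd.1 d.toProd.2) ∨ (∀ d ∈ c.darts, o.dir d.toProd.2 d.toProd.1)

/-- A graph is cyclically orientable if it admits an orientation in which every
chordless cycle is cyclically oriented. -/
def SimpleGraph.CyclicallyOrientable (G : SimpleGraph V) : Prop :=
  ∃ o : G.Orientation, ∀ (v : V) (c : G.Walk v v), c.IsChordlessCycle → o.IsCyclicOn c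

/-- A subgraph has no cut vertex if it is connected and remains connected after
the deletion of any single one of its vertices. -/
def SimpleGraph.Subgraph.HasNoCutVertex {G : SimpleGraph V} (H : G.Subgraph) : Prop :=
  H.coe.Connected ∧ ∀ v ∈ H.verts, (H.deleteVerts {v}).coe.Connected

/-- A block (two-connected component) of `G`: a maximal subgraph of `G` that has
no cut vertex. -/
def SimpleGraph.Subgraph.IsBlock {G : SimpleGraph V} (H : G.Subgraph) : Prop :=
  H.HasNoCutVertex ∧ ∀ H' : G.Subgraph, H ≤ H' → H'.HasNoCutVertex → H' = H

/-- A graph is two-connected if it is connected and the removal of any single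
vertex leaves it connected (at least two vertices must be removed to
disconnect it). -/
def SimpleGraph.IsTwoConnected (G : SimpleGraph V) : Prop :=
  G.Connected ∧ ∀ v : V, (G.induce {w : V | w ≠ v}).Connected

/-- A graph consists of a single cycle: some cycle passes through all its
vertices and uses all its edges. (A cycle has at least 3 vertices.) -/
def SimpleGraph.IsCycleGraph (G : SimpleGraph V) : Prop :=
  ∃ (v : V) (c : G.Walk v v), c.IsCycle ∧ (∀ w : V, w ∈ c.support) ∧
    ∀ e ∈ G.edgeSet, e ∈ c.edges

/-- Two subgraphs meet along the single edge `(x, y)`: their intersection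
consists exactly of the vertices `x, y` and the edge between them. -/
def SimpleGraph.Subgraph.MeetAlongSingleEdge {G : SimpleGraph V} (G' C : G.Subgraph)
    (x y : V) : Prop :=
  x ≠ y ∧ (G' ⊓ C).verts = {x, y} ∧ (G' ⊓ C).edgeSet = {s(x, y)}

namespace CyclicOrientation

variable {G : SimpleGraph V} {a b c q : V} {A C K L S T : Set V}

/-! ### Chordless cycles through a vertex -/

lemma isChordless_of_length_eq_dist {p : G.Walk a c} (hp : p.length = G.dist a c) :
    p.IsChordless := by
  have consecutive : ∀ i j, i < j → j ≤ p.length → G.Adj (p.getVert i) (p.getVert j) →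
      s(p.getVert i, p.getVert j) ∈ p.edges := by
    intro i j hij hj hadj
    have hdist := length_eq_dist_of_subwalk hp
      (((p.drop i).isSubwalk_take (j - i)).trans (p.isSubwalk_drop i))
    have hend : (p.drop i).getVert (j - i) = p.getVert j := by
      rw [Walk.drop_getVert, Nat.add_sub_cancel' hij.le]
    rw [Walk.take_length, Walk.drop_length, hend, dist_eq_one_iff_adj.mpr hadj] at hdist
    obtain rfl : j = i + 1 := by omega
    exact p.mem_edges_toSubgraph.mp (p.toSubgraph_adj_getVert (by omega))
  refine Walk.isChordless_iff_forall_mem_edges.mpr fun u w hu hw hadj => ?_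
  obtain ⟨i, rfl, hi⟩ := Walk.mem_support_iff_exists_getVert.mp hu
  obtain ⟨j, rfl, hj⟩ := Walk.mem_support_iff_exists_getVert.mp hw
  rcases lt_trichotomy i j with hij | rfl | hji
  · exact consecutive i j hij hj hadj
  · exact absurd rfl hadj.ne
  · exact Sym2.eq_swap ▸ consecutive j i hji hi hadj.symm

lemma isChordless_map_embedding {W : Type*} {H : SimpleGraph W} (f : H ↪g G) {x y : W}
    {p : H.Walk x y} (hp : p.IsChordless) : (p.map f.toHom).IsChordless := by
  refine Walk.isChordless_iff_forall_mem_edges.mpr fun u w hu hw hadj => ?_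
  rw [Walk.support_map, List.mem_map] at hu hw
  obtain ⟨u, hu, rfl⟩ := hu
  obtain ⟨w, hw, rfl⟩ := hw
  rw [Walk.edges_map]
  exact List.mem_map.mpr ⟨s(u, w), hp.mem_edges hu hw (f.map_adj_iff.mp hadj), rfl⟩

lemma exists_isPath_isChordless (hS : (G.induce S).Preconnected) (ha : a ∈ S) (hc : c ∈ S) :
    ∃ p : G.Walk a c, p.IsPath ∧ p.IsChordless ∧ ∀ x ∈ p.support, x ∈ S := by
  obtain ⟨p, hp, hdist⟩ := (hS ⟨a, ha⟩ ⟨c, hc⟩).exists_path_of_dist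
  let f := Embedding.induce (G := G) S
  refine ⟨p.map f.toHom, hp.map f.injective,
    isChordless_map_embedding f (isChordless_of_length_eq_dist hdist), fun x hx => ?_⟩
  obtain ⟨y, -, rfl⟩ := List.mem_map.mp (p.support_map f.toHom ▸ hx)
  exact y.2

/-- The set of vertices with a neighbor in `K`. It may meet `K`. -/
def neighborhood (G : SimpleGraph V) (K : Set V) : Set V := {x | ∃ y ∈ K, G.Adj x y}

/-- `S` bypasses `b` from `a` to `c`: it is a connected vertex set avoiding `b` in which `b` has
exactly the two neighbors `a ≠ c`. For some `S` this holds exactly when `a`, `b`, `c` are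
consecutive vertices of a chordless cycle; `S` need not be a path, so that such sets can be built
by taking unions. -/
structure IsBypass (G : SimpleGraph V) (S : Set V) (b a c : V) : Prop where
  preconnected : (G.induce S).Preconnected
  notMem : b ∉ S
  ne : a ≠ c
  neighborSet_inter : G.neighborSet b ∩ S = {a, c}

namespace IsBypass

lemma symm (h : IsBypass G S b a c) : IsBypass G S b c a :=
  ⟨h.preconnected, h.notMem, h.ne.symm, h.neighborSet_inter.trans (Set.pair_comm a c)⟩

lemma adj_left (h : IsBypass G S b a c) : G.Adj b a :=
  (h.neighborSet_inter.ge (Set.mem_insert a {c})).1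

lemma left_mem (h : IsBypass G S b a c) : a ∈ S :=
  (h.neighborSet_inter.ge (Set.mem_insert a {c})).2

lemma of_union (hS : (G.induce S).Preconnected) (hL : (G.induce L).Preconnected) (hbS : b ∉ S)
    (hbL : b ∉ L) (hbc : G.neighborSet b ∩ S = {c}) (hbq : G.neighborSet b ∩ L = {q})
    (hcq : c ≠ q) (hSL : (S ∩ neighborhood G L).Nonempty) : IsBypass G (S ∪ L) b c q := by
  obtain ⟨t, ht, r, hr, htr⟩ := hSL
  refine ⟨(connected_induce_union hS hL ht hr htr).preconnected, by simp [hbS, hbL], hcq, ?_⟩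
  rw [Set.inter_union_distrib_left, hbc, hbq, Set.singleton_union]

lemma exists_isChordlessCycle (h : IsBypass G S b a c) :
    ∃ (hcb : G.Adj c b) (hba : G.Adj b a) (p : G.Walk a c),
      (Walk.cons hcb (Walk.cons hba p)).IsChordlessCycle := by
  have hbc := h.symm.adj_left
  obtain ⟨p, hpath, hp, hpS⟩ :=
    exists_isPath_isChordless h.preconnected h.left_mem h.symm.left_mem
  have hbp : b ∉ p.support := fun hb => h.notMem (hpS b hb)
  have hN : ∀ x ∈ p.support, G.Adj b x → x = a ∨ x = c :=
    fun x hx hbx => h.neighborSet_inter.le ⟨hbx, hpS x hx⟩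
  refine ⟨hbc.symm, h.adj_left, p, ?_, fun u w hu hw huw => ?_⟩
  · rw [Walk.cons_isCycle_iff, Walk.cons_isPath_iff, Walk.edges_cons, List.mem_cons, not_or]
    refine ⟨⟨hpath, hbp⟩, ?_, fun he => hbp (p.snd_mem_support_of_mem_edges he)⟩
    simpa [Sym2.eq_iff, hbc.ne'] using h.ne.symm
  · simp only [Walk.support_cons, List.mem_cons, Walk.edges_cons] at hu hw ⊢
    have hcp := p.end_mem_support
    have hchord := fun hu hw => hp.mem_edges (u' := u) (v' := w) hu hw huw
    have := huw.ne
    grind [Sym2.eq_swap, huw.symm]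

lemma dir_iff_not_dir {o : G.Orientation}
    (ho : ∀ (v : V) (w : G.Walk v v), w.IsChordlessCycle → o.IsCyclicOn w)
    (h : IsBypass G S b a c) : o.dir b a ↔ ¬ o.dir b c := by
  obtain ⟨hcb, hba, p, hcyc⟩ := h.exists_isChordlessCycle
  have ha := o.adj_iff_dir b a hba
  have hc := o.adj_iff_dir c b hcb
  rcases ho _ _ hcyc with hdir | hdir <;>
    simp only [Walk.darts_cons, List.mem_cons, forall_eq_or_imp] at hdir <;>
    tauto

end IsBypass

/-- Each of the three bypasses would force two of the edges `bx`, `by`, `bz` to be oriented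
differently at `b`, but there are only two directions. -/
lemma not_isBypass_of_cyclicallyOrientable (hco : G.CyclicallyOrientable) {x y z : V}
    {S₁ S₂ S₃ : Set V} (hxy : IsBypass G S₁ b x y) (hyz : IsBypass G S₂ b y z) :
    ¬ IsBypass G S₃ b x z := by
  obtain ⟨o, ho⟩ := hco
  intro hxz
  have := hxy.dir_iff_not_dir ho
  have := hyz.dir_iff_not_dir ho
  have := hxz.dir_iff_not_dir ho
  tauto

/-- A hole is the vertex set of a chordless cycle. Triangles are included. -/
def IsHole (G : SimpleGraph V) (C : Set V) : Prop :=
  ∃ (v : V) (w : G.Walk v v), w.IsChordlessCycle ∧ {x | x ∈ w.support} = C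

lemma IsBypass.exists_isHole (h : IsBypass G S b a c) : ∃ C, IsHole G C ∧ {a, b, c} ⊆ C := by
  obtain ⟨hcb, hba, p, hcyc⟩ := h.exists_isChordlessCycle
  refine ⟨_, ⟨c, _, hcyc, rfl⟩, ?_⟩
  rintro x (rfl | rfl | rfl) <;> simp

lemma connected_induce_support_diff_start {p : G.Walk a c} (hp : p.IsPath) (hac : a ≠ c) :
    (G.induce ({x | x ∈ p.support} \ {a})).Connected := by
  have hsupp := Walk.cons_support_tail (Walk.not_nil_of_ne (p := p) hac)
  have ha : a ∉ p.tail.support := (List.nodup_cons.mp (hsupp ▸ hp.support_nodup)).1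
  have : {x | x ∈ p.support} \ {a} = {x | x ∈ p.tail.support} := by
    ext x
    simp only [Set.mem_sdiff, Set.mem_ofPred_eq, Set.mem_singleton_iff, ← hsupp, List.mem_cons]
    grind
  exact this ▸ p.tail.connected_induce_support

lemma isChordlessCycle_rotate [DecidableEq V] {v : V} {w : G.Walk v v} (hw : w.IsChordlessCycle)
    (hb : b ∈ w.support) : (w.rotate b hb).IsChordlessCycle := by
  refine ⟨hw.1.rotate hb, fun x y hx hy hxy => ?_⟩
  rw [Walk.mem_support_rotate_iff] at hx hy
  exact (w.rotate_edges b hb).mem_iff.mpr (hw.2 x y hx hy hxy)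

lemma neighborSet_inter_support_of_isChordlessCycle {w : G.Walk b b} (hw : w.IsChordlessCycle) :
    G.neighborSet b ∩ {x | x ∈ w.support} = {w.snd, w.penultimate} := by
  have hind : w.toSubgraph.IsInduced :=
    Walk.isInduced_toSubgraph.mpr (Walk.isChordless_iff_forall_mem_edges.mpr hw.2)
  rw [← hw.1.neighborSet_toSubgraph_endpoint]
  ext x
  refine ⟨fun ⟨hbx, hx⟩ => hind ?_ ?_ hbx, fun hbx => ⟨hbx.adj_sub, ?_⟩⟩
  · exact w.mem_verts_toSubgraph.mpr w.start_mem_support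
  · exact w.mem_verts_toSubgraph.mpr hx
  · exact w.mem_verts_toSubgraph.mp hbx.snd_mem

namespace IsHole

lemma exists_isPath (hC : IsHole G C) (hb : b ∈ C) :
    ∃ (c d : V) (p : G.Walk c d), p.IsPath ∧ c ≠ d ∧ C \ {b} = {x | x ∈ p.support} ∧
      G.neighborSet b ∩ C = {c, d} := by
  classical
  obtain ⟨v, w₀, hw₀, rfl⟩ := hC
  obtain ⟨w, hw, hsupp⟩ : ∃ w : G.Walk b b, w.IsChordlessCycle ∧
      ∀ x, x ∈ w.support ↔ x ∈ w₀.support :=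
    ⟨_, isChordlessCycle_rotate hw₀ hb, fun x => w₀.mem_support_rotate_iff b hb⟩
  simp only [← hsupp]
  have hN := neighborSet_inter_support_of_isChordlessCycle hw
  have hne := hw.1.snd_ne_penultimate
  cases w with
  | nil => exact absurd hw.1 Walk.not_isCycle_nil
  | @cons _ c _ hbc q =>
    obtain ⟨d, p, hdb, rfl⟩ : ∃ (d : V) (p : G.Walk c d) (hdb : G.Adj d b), q = p.concat hdb :=
      ⟨_, _, _, (q.concat_dropLast (q.adj_penultimate (Walk.not_nil_of_ne hbc.ne'))).symm⟩
    obtain ⟨hp, hbp⟩ := (Walk.concat_isPath_iff hdb).mp ((Walk.cons_isCycle_iff _ hbc).mp hw.1).1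
    rw [Walk.snd_cons, Walk.penultimate_cons_of_not_nil _ _ (Walk.not_nil_of_ne hbc.ne'),
      Walk.penultimate_concat] at hN hne
    refine ⟨c, d, p, hp, hne, ?_, hN⟩
    ext x
    simp only [Walk.support_cons, Walk.support_concat, List.mem_cons, List.mem_append,
      List.not_mem_nil, or_false, Set.mem_sdiff, Set.mem_ofPred_eq, Set.mem_singleton_iff]
    grind

lemma exists_isBypass (hC : IsHole G C) (hb : b ∈ C) :
    ∃ c d, IsBypass G (C \ {b}) b c d ∧ (G.induce ((C \ {b}) \ {c})).Connected ∧
      (G.induce ((C \ {b}) \ {d})).Connected := by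
  obtain ⟨c, d, p, hp, hcd, hsupp, hN⟩ := hC.exists_isPath hb
  refine ⟨c, d, ⟨?_, fun h => h.2 rfl, hcd, ?_⟩, ?_, ?_⟩
  · exact hsupp ▸ p.connected_induce_support.preconnected
  · rw [← Set.inter_sdiff_assoc, hN, Set.sdiff_singleton_eq_self]
    exact fun hb' => G.irrefl (hN.ge hb').1
  · exact hsupp ▸ connected_induce_support_diff_start hp hcd
  · have hsupp' : C \ {b} = {x | x ∈ p.reverse.support} := by
      rw [hsupp, Walk.support_reverse]
      simp only [List.mem_reverse]
    exact hsupp' ▸ connected_induce_support_diff_start hp.reverse hcd.symm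

lemma nonempty (hC : IsHole G C) : C.Nonempty := by
  obtain ⟨v, w, -, rfl⟩ := hC
  exact ⟨v, w.start_mem_support⟩

lemma ncard_neighborSet (hC : IsHole G C) (hb : b ∈ C) (hN : G.neighborSet b ⊆ C) :
    (G.neighborSet b).ncard = 2 := by
  obtain ⟨c, d, -, -, hcd, -, hcd'⟩ := hC.exists_isPath hb
  rw [← Set.inter_eq_left.mpr hN, hcd', Set.ncard_pair hcd]

end IsHole

/-! ### Connected sets attached to a hole -/

lemma exists_connected_induce_diff_singleton (hKfin : K.Finite) (hK : (G.induce K).Connected)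
    (hKnt : K.Nontrivial) : ∃ v ∈ K, (G.induce (K \ {v})).Connected := by
  have := hKfin.to_subtype
  have := hKnt.coe_sort
  obtain ⟨⟨v, hv⟩, hconn⟩ := hK.exists_connected_induce_compl_singleton_of_finite_nontrivial
  let f : (G.induce K).induce {⟨v, hv⟩}ᶜ →g G.induce (K \ {v}) :=
    { toFun := fun x => ⟨x.1.1, x.1.2, fun h => x.2 (Subtype.ext h)⟩
      map_rel' := id }
  have hf : Function.Surjective f := fun x =>
    ⟨⟨⟨x.1, x.2.1⟩, fun h => x.2.2 (congrArg Subtype.val h)⟩, rfl⟩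
  exact ⟨v, hv, hconn.map f hf⟩

/-- A minimal connected subset of `K` adjacent to all of `T` works: it has a vertex that can be
discarded without disconnecting it, and this vertex must be the only neighbor of some `b ∈ T`. -/
lemma exists_neighborSet_inter_eq_singleton (hKfin : K.Finite) (hK : (G.induce K).Connected)
    (hT : T.Nonempty) (hTK : T ⊆ neighborhood G K) :
    ∃ L ⊆ K, (G.induce L).Connected ∧ T ⊆ neighborhood G L ∧
      ∃ b ∈ T, ∃ q, G.neighborSet b ∩ L = {q} := by
  have hfin : {L | L ⊆ K ∧ (G.induce L).Connected ∧ T ⊆ neighborhood G L}.Finite :=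
    hKfin.finite_subsets.subset fun _ h => h.1
  obtain ⟨L, -, ⟨hLK, hL, hTL⟩, hmin⟩ := hfin.exists_le_minimal ⟨subset_rfl, hK, hTK⟩
  refine ⟨L, hLK, hL, hTL, ?_⟩
  by_contra! hns
  have hnt : ∀ t ∈ T, (G.neighborSet t ∩ L).Nontrivial := fun t ht => by
    obtain ⟨r, hr, htr⟩ := hTL ht
    have hne : (G.neighborSet t ∩ L).Nonempty := ⟨r, htr, hr⟩
    exact hne.exists_eq_singleton_or_nontrivial.resolve_left fun ⟨q, hq⟩ => hns t ht q hq
  obtain ⟨t, ht⟩ := hT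
  obtain ⟨v, hv, hconn⟩ := exists_connected_induce_diff_singleton (hKfin.subset hLK) hL
    ((hnt t ht).mono Set.inter_subset_right)
  have hTv : T ⊆ neighborhood G (L \ {v}) := fun s hs => by
    obtain ⟨r, ⟨hsr, hr⟩, hrv⟩ := (hnt s hs).exists_ne v
    exact ⟨r, ⟨hr, hrv⟩, hsr⟩
  exact (hmin ⟨Set.sdiff_subset.trans hLK, hconn, hTv⟩ Set.sdiff_subset hv).2 rfl

lemma IsHole.inter_neighborhood_subset_pair (hco : G.CyclicallyOrientable) (hC : IsHole G C)
    (hKfin : K.Finite) (hK : (G.induce K).Connected) (hCK : Disjoint C K) :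
    ∃ b ∈ C, ∃ c ∈ C, G.Adj b c ∧ C ∩ neighborhood G K ⊆ {b, c} := by
  by_contra! hcon
  have hT : (C ∩ neighborhood G K).Nonempty := by
    obtain ⟨b, hb⟩ := hC.nonempty
    obtain ⟨c, _, h, -, -⟩ := hC.exists_isBypass hb
    obtain ⟨t, ht, -⟩ := Set.not_subset.mp (hcon b hb c h.left_mem.1 h.adj_left)
    exact ⟨t, ht⟩
  obtain ⟨L, hLK, hL, hTL, b, ⟨hb, -⟩, q, hq⟩ :=
    exists_neighborSet_inter_eq_singleton hKfin hK hT Set.inter_subset_right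
  have hCL : Disjoint C L := hCK.mono_right hLK
  have hqL : q ∈ L := (hq.ge rfl).2
  obtain ⟨c, d, hcd, hc, hd⟩ := hC.exists_isBypass hb
  -- An attachment other than `b` and `d` joins `L` to what remains of `C` without `b` and `d`.
  have bypass_q : ∀ {c d}, IsBypass G (C \ {b}) b c d → (G.induce ((C \ {b}) \ {d})).Connected →
      IsBypass G ((C \ {b}) \ {d} ∪ L) b c q := by
    intro c d h hconn
    refine .of_union hconn.preconnected hL.preconnected (fun hb' => hb'.1.2 rfl)
      (hCL.notMem_of_mem_left hb) ?_ hq (hCL.ne_of_mem h.left_mem.1 hqL) ?_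
    · rw [← Set.inter_sdiff_assoc, h.neighborSet_inter]
      exact Set.pair_sdiff_right h.ne
    · obtain ⟨t, ht, htbd⟩ := Set.not_subset.mp
        (hcon b hb d h.symm.left_mem.1 h.symm.adj_left)
      exact ⟨t, ⟨⟨ht.1, fun h => htbd (.inl h)⟩, fun h => htbd (.inr h)⟩, hTL ht⟩
  exact not_isBypass_of_cyclicallyOrientable hco hcd (bypass_q hcd.symm hc) (bypass_q hcd hd)

lemma IsBypass.of_singleton_union (hba : G.Adj b a) (hL : (G.induce L).Preconnected)
    (ha : a ∉ L) (hb : b ∉ L) (haL : a ∈ neighborhood G L) (hbq : G.neighborSet b ∩ L = {q}) :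
    IsBypass G ({a} ∪ L) b a q :=
  .of_union (by simp) hL hba.ne hb (Set.inter_eq_right.mpr (Set.singleton_subset_iff.mpr hba)) hbq
    (ne_of_mem_of_not_mem (hbq.ge rfl).2 ha).symm ⟨a, rfl, haL⟩

lemma exists_isHole_of_adj (hab : G.Adj a b) (hKfin : K.Finite) (hK : (G.induce K).Connected)
    (habK : Disjoint {a, b} K) (hatt : {a, b} ⊆ neighborhood G K) :
    ∃ C, IsHole G C ∧ {a, b} ⊆ C ∧ (C ∩ K).Nonempty := by
  obtain ⟨L, hLK, hL, hTL, t, ht, q, hq⟩ :=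
    exists_neighborSet_inter_eq_singleton hKfin hK (Set.insert_nonempty a {b}) hatt
  wlog hbt : t = b generalizing a b
  · rw [Set.pair_comm] at *
    exact this hab.symm habK hatt hTL ht (ht.resolve_left hbt)
  subst hbt
  obtain ⟨C, hC, hsub⟩ := (IsBypass.of_singleton_union hab.symm hL.preconnected
    (fun h => habK.notMem_of_mem_left (.inl rfl) (hLK h))
    (fun h => habK.notMem_of_mem_left (.inr rfl) (hLK h)) (hTL (.inl rfl)) hq).exists_isHole
  exact ⟨C, hC, fun x hx => hsub (hx.imp id .inl), q, hsub (by simp), hLK (hq.ge rfl).2⟩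

/-! ### Components outside a set of vertices -/

lemma connected_induce_componentCompl (D : G.ComponentCompl C) :
    (G.induce (D : Set V)).Connected := by
  let f : D.toSimpleGraph →g G.induce (D : Set V) :=
    { toFun := fun x => ⟨x.1.1, x.1.2, x.2⟩
      map_rel' := id }
  exact D.connected_toSimpleGraph.map f fun ⟨x, hxC, hx⟩ => ⟨⟨⟨x, hxC⟩, hx⟩, rfl⟩

lemma inter_neighborhood_componentCompl_inter_nonempty (hS : (G.induce S).Preconnected)
    (D : G.ComponentCompl C) (hDS : ((D : Set V) ∩ S).Nonempty) (hSD : ¬ S ⊆ D) :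
    (C ∩ neighborhood G (D : Set V) ∩ S).Nonempty := by
  obtain ⟨x, hxD, hxS⟩ := hDS
  obtain ⟨y, hyS, hyD⟩ := Set.not_subset.mp hSD
  obtain ⟨w⟩ := hS ⟨x, hxS⟩ ⟨y, hyS⟩
  obtain ⟨e, -, hu, hv⟩ := w.exists_boundary_dart {x | x.1 ∈ D} hxD hyD
  have huv : G.Adj e.fst e.snd := e.adj
  exact ⟨e.snd, ⟨by_contra fun hC => hv (ComponentCompl.mem_of_adj _ _ hu hC huv),
    e.fst, hu, huv.symm⟩, e.snd.2⟩

lemma coe_hom_componentCompl (D : G.ComponentCompl C) (hSC : S ⊆ C)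
    (hDS : C ∩ neighborhood G (D : Set V) ⊆ S) : (D.hom hSC : Set V) = D := by
  refine (D.subset_hom hSC).antisymm' (by_contra fun hsub => ?_)
  obtain ⟨t, ht, htD⟩ := inter_neighborhood_componentCompl_inter_nonempty
    (connected_induce_componentCompl (D.hom hSC)).preconnected D
    (by rw [Set.inter_eq_left.mpr (D.subset_hom hSC)]; exact D.nonempty) hsub
  exact ComponentCompl.notMem_of_mem htD (hDS ht)

lemma nontrivial_inter_neighborhood_componentCompl (h2 : G.IsTwoConnected) (hC : C.Nontrivial)
    (D : G.ComponentCompl C) : (C ∩ neighborhood G (D : Set V)).Nontrivial := by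
  have key : ∀ b ∈ C, ∃ t ∈ C ∩ neighborhood G (D : Set V), t ≠ b := fun b hb => by
    obtain ⟨a, ha, hab⟩ := hC.exists_ne b
    obtain ⟨x, hx⟩ := D.nonempty
    have hxb : x ≠ b := fun h => ComponentCompl.notMem_of_mem hx (h ▸ hb)
    exact inter_neighborhood_componentCompl_inter_nonempty (h2.2 b).preconnected D ⟨x, hx, hxb⟩
      fun h => ComponentCompl.notMem_of_mem (h hab) ha
  obtain ⟨b, hb⟩ := hC.nonempty
  obtain ⟨t, ht, -⟩ := key b hb
  obtain ⟨s, hs, hst⟩ := key t ht.1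
  exact ⟨s, hs, t, ht, hst⟩

lemma exists_componentCompl_ssubset (hco : G.CyclicallyOrientable) (hC : IsHole G C)
    (hAC : A ⊆ C) (D : G.ComponentCompl A) (hD : (D : Set V).Finite) (hCD : (C ∩ D).Nonempty)
    (hDC : ¬ (D : Set V) ⊆ C) :
    ∃ a b, G.Adj a b ∧ ∃ D' : G.ComponentCompl {a, b}, (D' : Set V) ⊂ D := by
  obtain ⟨x, hxD, hxC⟩ := Set.not_subset.mp hDC
  obtain ⟨c, hcC, hcD⟩ := hCD
  let E := G.componentComplMk hxC
  have hED : (E : Set V) ⊆ D := (E.hom_eq_iff_le hAC D).mp <|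
    (E.hom_eq_iff_not_disjoint hAC D).mpr <|
      Set.not_disjoint_iff.mpr ⟨x, G.componentComplMk_mem hxC, hxD⟩
  have hss : (E : Set V) ⊂ D := ⟨hED, fun h => ComponentCompl.notMem_of_mem (h hcD) hcC⟩
  obtain ⟨a, ha, b, hb, hab, hatt⟩ := hC.inter_neighborhood_subset_pair hco
    (hD.subset hED) (connected_induce_componentCompl E) E.disjoint_right
  have habC : {a, b} ⊆ C := Set.pair_subset ha hb
  exact ⟨a, b, hab, E.hom habC, (coe_hom_componentCompl E habC hatt).symm ▸ hss⟩

lemma exists_mem_componentCompl_ncard_neighborSet_eq_two (h2 : G.IsTwoConnected)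
    (hco : G.CyclicallyOrientable) (hab : G.Adj a b) (D : G.ComponentCompl {a, b})
    (hD : (D : Set V).Finite) : ∃ v ∈ D, (G.neighborSet v).ncard = 2 := by
  induction hn : (D : Set V).ncard using Nat.strong_induction_on generalizing a b with
  | _ n ih =>
  subst hn
  have hatt : {a, b} ⊆ neighborhood G (D : Set V) := by
    obtain ⟨x, hx, y, hy, hxy⟩ :=
      nontrivial_inter_neighborhood_componentCompl h2 (Set.nontrivial_pair hab.ne) D
    rcases hx.1 with rfl | rfl <;> rcases hy.1 with rfl | rfl
    exacts [absurd rfl hxy, Set.pair_subset hx.2 hy.2, Set.pair_subset hy.2 hx.2, absurd rfl hxy]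
  obtain ⟨C, hC, habC, hCDne⟩ := exists_isHole_of_adj hab hD
    (connected_induce_componentCompl D) D.disjoint_right hatt
  by_cases hDC : (D : Set V) ⊆ C
  · obtain ⟨c, hcC, hcD⟩ := hCDne
    refine ⟨c, hcD, hC.ncard_neighborSet hcC fun x hx => ?_⟩
    by_cases hxab : x ∈ ({a, b} : Set V)
    · exact habC hxab
    · exact hDC (ComponentCompl.mem_of_adj c x hcD hxab hx)
  · obtain ⟨a', b', hab', D', hD'⟩ := exists_componentCompl_ssubset hco hC habC D hD hCDne hDC
    obtain ⟨v, hv, hdeg⟩ := ih _ (Set.ncard_lt_ncard hD' hD) hab' D' (hD.subset hD'.subset) rfl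
    exact ⟨v, hD'.subset hv, hdeg⟩

end CyclicOrientation

/-- Every two-connected cyclically orientable finite simple graph
with at least 3 vertices has a vertex of degree 2. -/
theorem twoConnected_co_exists_degree_two {V : Type*} [Fintype V] [DecidableEq V]
    (G : SimpleGraph V) [DecidableRel G.Adj] (h2 : G.IsTwoConnected)
    (hco : G.CyclicallyOrientable) (hn : 3 ≤ Fintype.card V) :
    ∃ v : V, G.degree v = 2 := by
  obtain ⟨a⟩ := h2.1.nonempty
  have : Nontrivial V := Fintype.one_lt_card_iff_nontrivial.mp (by omega)
  obtain ⟨b, hab⟩ := h2.1.preconnected.exists_adj_of_nontrivial a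
  obtain ⟨x, -, hx⟩ := Finset.exists_mem_notMem_of_card_lt_card
    (s := {a, b}) (t := Finset.univ) (Finset.card_le_two.trans_lt (Finset.card_univ (α := V) ▸ hn))
  have hxab : x ∉ ({a, b} : Set V) := by simpa using hx
  obtain ⟨v, -, hv⟩ := CyclicOrientation.exists_mem_componentCompl_ncard_neighborSet_eq_two h2 hco
    hab (G.componentComplMk hxab) (Set.toFinite _)
  exact ⟨v, by rwa [← G.card_neighborSet_eq_degree, Set.fintypeCard_eq_ncard]⟩
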